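/- Let (X,T) be a distal minimal topological dynamical system, let x0 ∈ X, and let L be the closure in X⁵ of the set {(T^m x0, T^n x0, T^{m+n} x0, T^p x0, T^{p+m} x0) : m,n,p ∈ ℤ}. Suppose (x1,x2,x3,x4,x5) ∈ L and x'_2, x'_4 ∈ X satisfy (x2,x'_2) ∈ RP and (x4,x'_4) ∈ RP. Then (x1,x'_2,x3,x'_4,x5) ∈ L. -/

import Mathlib

open Filter Topology

/-- The `n`-th iterate (`n : ℤ`) of a homeomorphism `T : X → X`. -/
def iterZ {X : Type*} [TopologicalSpace X] (T : X ≃ₜ X) (n : ℤ) : X → X :=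
  fun x => (T.toEquiv ^ n) x

section Defs

variable {X : Type*} [TopologicalSpace X]

/-- The set of parallelograms `𝒫`: the closure in `X⁴` of
`{(x, Tᵐx, Tⁿx, Tᵐ⁺ⁿx) : x ∈ X, m, n ∈ ℤ}`. -/
def Para (T : X ≃ₜ X) : Set (X × X × X × X) :=
  closure {q | ∃ (x : X) (m n : ℤ),
    q = (x, iterZ T m x, iterZ T n x, iterZ T (m + n) x)}

/-- The set of parallelepipeds `𝒬`: the closure in `X⁸ = X⁴ × X⁴` of
`{(x, Tᵐx, Tⁿx, Tᵐ⁺ⁿx, Tᵖx, Tᵐ⁺ᵖx, Tⁿ⁺ᵖx, Tᵐ⁺ⁿ⁺ᵖx) : x ∈ X, m, n, p ∈ ℤ}`. -/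
def Pip (T : X ≃ₜ X) : Set ((X × X × X × X) × (X × X × X × X)) :=
  closure {q | ∃ (x : X) (m n p : ℤ),
    q = ((x, iterZ T m x, iterZ T n x, iterZ T (m + n) x),
         (iterZ T p x, iterZ T (m + p) x, iterZ T (n + p) x, iterZ T (m + n + p) x))}

end Defs

section MetricDefs

variable {X : Type*} [MetricSpace X]

/-- `(X, T)` is transitive: some point has dense orbit `{Tⁿx : n ∈ ℤ}`. -/
def IsTransitive (T : X ≃ₜ X) : Prop :=
  ∃ x : X, Dense (Set.range fun n : ℤ => iterZ T n x)

/-- `(X, T)` is minimal: every point has dense orbit. -/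
def IsMinimal (T : X ≃ₜ X) : Prop :=
  ∀ x : X, Dense (Set.range fun n : ℤ => iterZ T n x)

/-- `(x, y)` is a proximal pair: `inf_{n ∈ ℤ} d(Tⁿx, Tⁿy) = 0`. -/
def ProximalPair (T : X ≃ₜ X) (x y : X) : Prop :=
  ⨅ n : ℤ, dist (iterZ T n x) (iterZ T n y) = 0

/-- `(X, T)` is distal: every pair of distinct points is distal,
i.e. `inf_{n ∈ ℤ} d(Tⁿx, Tⁿy) > 0`. -/
def IsDistal (T : X ≃ₜ X) : Prop :=
  ∀ x y : X, x ≠ y → 0 < ⨅ n : ℤ, dist (iterZ T n x) (iterZ T n y)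

/-- The regionally proximal relation `RP`. -/
def RP (T : X ≃ₜ X) (x y : X) : Prop :=
  ∀ ε > 0, ∃ x' y' : X, ∃ n : ℤ,
    dist x' x < ε ∧ dist y' y < ε ∧ dist (iterZ T n x') (iterZ T n y') < ε

/-- The doubly regionally proximal relation `RP²`. -/
def RP2 (T : X ≃ₜ X) (x y : X) : Prop :=
  ∀ ε > 0, ∃ x' y' : X, ∃ m n : ℤ,
    dist x' x < ε ∧ dist y' y < ε ∧
    dist (iterZ T m x') (iterZ T m y') < ε ∧
    dist (iterZ T n x') (iterZ T n y') < ε ∧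
    dist (iterZ T (m + n) x') (iterZ T (m + n) y') < ε

/-- The strongly doubly regionally proximal relation `RP²ₛ`. -/
def RP2S (T : X ≃ₜ X) (x y : X) : Prop :=
  ∀ ε > 0, ∃ x' y' : X, ∃ m n : ℤ,
    dist x' x < ε ∧ dist y' y < ε ∧
    dist (iterZ T m x') y < ε ∧ dist (iterZ T n x') y < ε ∧
    dist (iterZ T (m + n) x') y < ε ∧
    dist (iterZ T m y') y < ε ∧ dist (iterZ T n y') y < ε ∧
    dist (iterZ T (m + n) y') y < ε

end MetricDefs

/-!
Write `E` for the Ellis semigroup of `(X, T)`. It is stable under composition and, by distality and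
the existence of idempotents, every element of `E` has a left inverse in `E`. Any element of `E`
may be applied to an edge of a parallelogram. If the edge `(y, a)` is generic in the sense of Baire
category, then conversely every parallelogram over it is `(y, a, r y, r a)` for some `r ∈ E`. By
minimality, `E` moves any edge `(x, x')` to a generic one, and left inverses move it back. Hence

* `(x, x', z, w) ∈ Para T` and `RP T z z'` imply `(x, x', z', w) ∈ Para T`: on a generic edge,
  apply a left inverse of `r` to the parallelogram `(r y, r a, z', r a)`, which exists by
  minimality;
* two parallelograms `(x₀, x₁, x₂, x₃)` and `(x₀, x₁, x₄, x₅)` can be approximated simultaneously,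
  i.e. `L` is the fibre product of two copies of `Para T` over the edge `(x₀, x₁)`.
-/

section Residual

variable {ι Y Z : Type*} [TopologicalSpace Y] [TopologicalSpace Z]

lemma isNowhereDense_frontier_of_isOpen {U : Set Y} (hU : IsOpen U) :
    IsNowhereDense (frontier U) := by
  rw [isClosed_frontier.isNowhereDense_iff, ← frontier_compl]
  exact interior_frontier hU.isClosed_compl

-- It suffices that `y` avoid the boundary of `⋃ i, f i ⁻¹' U` for each `U` in a countable basis.
theorem eventually_residual_mem_closure_range [SecondCountableTopology Z] {f : ι → Y → Z}
    (hf : ∀ i, Continuous (f i)) :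
    ∀ᶠ y in residual Y, ∀ z, (y, z) ∈ closure {q : Y × Z | ∃ i, f i q.1 = q.2} →
      z ∈ closure (Set.range fun i ↦ f i y) := by
  have hbasis := TopologicalSpace.isBasis_countableBasis Z
  have avoids_frontiers : ∀ᶠ y in residual Y, ∀ U ∈ TopologicalSpace.countableBasis Z,
      y ∉ frontier (⋃ i, f i ⁻¹' U) :=
    (eventually_countable_ball (TopologicalSpace.countable_countableBasis Z)).2 fun U hU ↦
      (isNowhereDense_frontier_of_isOpen
        (isOpen_iUnion fun i ↦ (hbasis.isOpen hU).preimage (hf i))).isMeagre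
  filter_upwards [avoids_frontiers] with y hy z hz
  refine hbasis.mem_closure_iff.2 fun U hU hzU ↦ ?_
  have y_limit : y ∈ closure (⋃ i, f i ⁻¹' U) := by
    refine mem_closure_iff.2 fun V hV hyV ↦ ?_
    obtain ⟨q, ⟨hqV, hqU⟩, i, hi⟩ :=
      mem_closure_iff.1 hz (V ×ˢ U) (hV.prod (hbasis.isOpen hU)) ⟨hyV, hzU⟩
    exact ⟨q.1, hqV, Set.mem_iUnion.2 ⟨i, by rwa [Set.mem_preimage, hi]⟩⟩
  have y_mem : y ∈ ⋃ i, f i ⁻¹' U := by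
    by_contra h
    exact hy U hU ⟨y_limit, fun hint ↦ h (interior_subset hint)⟩
  obtain ⟨i, hi⟩ := Set.mem_iUnion.1 y_mem
  exact ⟨f i y, hi, i, rfl⟩

end Residual

theorem exists_leftInverse_of_isCompact_of_comp_mem {X : Type*} [TopologicalSpace X] [T2Space X]
    {S : Set (X → X)} (hS : IsCompact S) (hcomp : ∀ p ∈ S, ∀ q ∈ S, p ∘ q ∈ S)
    (hinj : ∀ p ∈ S, Function.Injective p) {p : X → X} (hp : p ∈ S) :
    ∃ q ∈ S, Function.LeftInverse q p := by
  let : TopologicalSpace (Function.End X) := Pi.topologicalSpace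
  have : T2Space (Function.End X) := inferInstanceAs (T2Space (X → X))
  have continuous_comp_right (r : X → X) : Continuous fun q : X → X ↦ q ∘ r := by fun_prop
  obtain ⟨_, ⟨q, hq, rfl⟩, hidem⟩ := exists_idempotent_in_compact_subsemigroup
    (M := Function.End X) continuous_comp_right ((fun q : X → X ↦ q ∘ p) '' S) ⟨_, p, hp, rfl⟩
    (hS.image (continuous_comp_right p)) (by
      rintro _ ⟨a, ha, rfl⟩ _ ⟨b, hb, rfl⟩
      exact ⟨a ∘ p ∘ b, hcomp _ ha _ (hcomp _ hp _ hb), rfl⟩)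
  exact ⟨q, hq, fun x ↦ hinj _ (hcomp _ hq _ hp) (congrFun hidem x)⟩

section Ellis

variable {X : Type*} [TopologicalSpace X] {T : X ≃ₜ X}

lemma iterZ_zero (T : X ≃ₜ X) (x : X) : iterZ T 0 x = x := by
  simp [iterZ]

lemma iterZ_add (T : X ≃ₜ X) (m n : ℤ) (x : X) :
    iterZ T (m + n) x = iterZ T m (iterZ T n x) := by
  simp [iterZ, zpow_add]

lemma iterZ_eq_zpow (T : X ≃ₜ X) (n : ℤ) : iterZ T n = ⇑(T ^ n) := by
  let toPerm : (X ≃ₜ X) →* Equiv.Perm X := ⟨⟨Homeomorph.toEquiv, rfl⟩, fun _ _ ↦ rfl⟩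
  exact congrArg DFunLike.coe (map_zpow toPerm T n).symm

lemma continuous_iterZ (T : X ≃ₜ X) (n : ℤ) : Continuous (iterZ T n) :=
  iterZ_eq_zpow T n ▸ (T ^ n).continuous

/-- The Ellis enveloping semigroup of `(X, T)`: the closure of the iterates of `T` in `X → X`, for
the topology of pointwise convergence. -/
def ellisSemigroup (T : X ≃ₜ X) : Set (X → X) :=
  closure (Set.range (iterZ T))

lemma isCompact_ellisSemigroup [CompactSpace X] (T : X ≃ₜ X) : IsCompact (ellisSemigroup T) :=
  isClosed_closure.isCompact

lemma exists_mem_ellisSemigroup_of_mem_closure [CompactSpace X] {Y : Type*} [TopologicalSpace Y]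
    [T2Space Y] {f : (X → X) → Y} (hf : Continuous f) {y : Y}
    (hy : y ∈ closure (Set.range fun n ↦ f (iterZ T n))) : ∃ p ∈ ellisSemigroup T, f p = y := by
  have himage : f '' ellisSemigroup T = closure (f '' Set.range (iterZ T)) :=
    image_closure_of_isCompact (isCompact_ellisSemigroup T) hf.continuousOn
  rwa [← Set.mem_image, himage, ← Set.range_comp]

lemma mapsTo_closure_of_mem_ellisSemigroup {Y : Type*} [TopologicalSpace Y] {S : Set Y}
    (f : (X → X) → Y → Y) (hleft : ∀ y, Continuous fun g ↦ f g y)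
    (hright : ∀ g, Continuous g → Continuous (f g))
    (hS : ∀ n, Set.MapsTo (f (iterZ T n)) S S) {p : X → X} (hp : p ∈ ellisSemigroup T) :
    Set.MapsTo (f p) (closure S) (closure S) := fun y hy ↦ by
  have hiter : Set.MapsTo (fun g ↦ f g y) (Set.range (iterZ T)) (closure S) := by
    rintro _ ⟨n, rfl⟩
    exact map_mem_closure (hright _ (continuous_iterZ T n)) hy (hS n)
  have hlimit : f p y ∈ closure (closure S) :=
    map_mem_closure (f := fun g ↦ f g y) (hleft y) hp hiter
  rwa [closure_closure] at hlimit

lemma comp_mem_ellisSemigroup {p q : X → X} (hp : p ∈ ellisSemigroup T)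
    (hq : q ∈ ellisSemigroup T) : p ∘ q ∈ ellisSemigroup T := by
  refine mapsTo_closure_of_mem_ellisSemigroup (S := Set.range (iterZ T)) (fun g r ↦ g ∘ r)
    (by fun_prop) (fun g hg ↦ by fun_prop) ?_ hp hq
  rintro n _ ⟨k, rfl⟩
  exact ⟨n + k, funext (iterZ_add T n k)⟩

end Ellis

section Distal

variable {X : Type*} [MetricSpace X] {T : X ≃ₜ X}

lemma injective_of_mem_ellisSemigroup (hdistal : IsDistal T) {p : X → X}
    (hp : p ∈ ellisSemigroup T) : Function.Injective p := by
  intro x y hxy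
  by_contra hne
  have hbdd : BddBelow (Set.range fun n ↦ dist (iterZ T n x) (iterZ T n y)) :=
    ⟨0, Set.forall_mem_range.2 fun _ ↦ dist_nonneg⟩
  let separating : Set (X → X) := {g | ⨅ n, dist (iterZ T n x) (iterZ T n y) ≤ dist (g x) (g y)}
  have hclosed : IsClosed separating := isClosed_le continuous_const (by fun_prop)
  have hiter : Set.range (iterZ T) ⊆ separating := Set.range_subset_iff.2 fun n ↦ ciInf_le hbdd n
  have hle : ⨅ n, dist (iterZ T n x) (iterZ T n y) ≤ dist (p x) (p y) :=
    closure_minimal hiter hclosed hp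
  rw [hxy, dist_self] at hle
  exact (hdistal x y hne).not_ge hle

lemma exists_leftInverse_mem_ellisSemigroup [CompactSpace X] (hdistal : IsDistal T) {p : X → X}
    (hp : p ∈ ellisSemigroup T) : ∃ q ∈ ellisSemigroup T, Function.LeftInverse q p :=
  exists_leftInverse_of_isCompact_of_comp_mem (isCompact_ellisSemigroup T)
    (fun _ hp _ hq ↦ comp_mem_ellisSemigroup hp hq)
    (fun _ ↦ injective_of_mem_ellisSemigroup hdistal) hp

lemma IsMinimal.exists_mem_ellisSemigroup [CompactSpace X] (hmin : IsMinimal T) (x y : X) :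
    ∃ p ∈ ellisSemigroup T, p x = y :=
  exists_mem_ellisSemigroup_of_mem_closure (f := fun g ↦ g x) (by fun_prop) (hmin x y)

end Distal

section Parallelograms

variable {X : Type*} [TopologicalSpace X] {T : X ≃ₜ X} {x y z w : X}

lemma para_swap₂₃ (h : (x, y, z, w) ∈ Para T) : (x, z, y, w) ∈ Para T := by
  refine map_mem_closure (f := fun q : X × X × X × X ↦ (q.1, q.2.2.1, q.2.1, q.2.2.2))
    (by fun_prop) h ?_
  rintro _ ⟨x, m, n, rfl⟩
  exact ⟨x, n, m, by rw [add_comm]⟩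

lemma para_swap_edges (h : (x, y, z, w) ∈ Para T) : (z, w, x, y) ∈ Para T := by
  refine map_mem_closure (f := fun q : X × X × X × X ↦ (q.2.2.1, q.2.2.2, q.1, q.2.1))
    (by fun_prop) h ?_
  rintro _ ⟨x, m, n, rfl⟩
  refine ⟨iterZ T n x, m, -n, ?_⟩
  simp only [← iterZ_add, neg_add_cancel, iterZ_zero, add_assoc, add_zero]

variable {p : X → X}

lemma para_map₁₂ (hp : p ∈ ellisSemigroup T) (h : (x, y, z, w) ∈ Para T) :
    (p x, p y, z, w) ∈ Para T := by
  refine mapsTo_closure_of_mem_ellisSemigroup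
    (fun g (q : X × X × X × X) ↦ (g q.1, g q.2.1, q.2.2.1, q.2.2.2))
    (by fun_prop) (fun g hg ↦ by fun_prop) ?_ hp h
  rintro i _ ⟨x, m, n, rfl⟩
  refine ⟨iterZ T i x, m, n - i, ?_⟩
  simp only [← iterZ_add]
  ring_nf

lemma para_map₃₄ (hp : p ∈ ellisSemigroup T) (h : (x, y, z, w) ∈ Para T) :
    (x, y, p z, p w) ∈ Para T :=
  para_swap_edges (para_map₁₂ hp (para_swap_edges h))

lemma para_map₂₄ (hp : p ∈ ellisSemigroup T) (h : (x, y, z, w) ∈ Para T) :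
    (x, p y, z, p w) ∈ Para T :=
  para_swap₂₃ (para_map₃₄ hp (para_swap₂₃ h))

/-- The edge `(x, y)` is generic if every parallelogram over it is the image of the edge under an
element of the Ellis semigroup, acting on both endpoints at once. Almost every edge, in the sense of
Baire category, has this property. -/
def IsGenericEdge (T : X ≃ₜ X) (x y : X) : Prop :=
  ∀ z w, (x, y, z, w) ∈ Para T → ∃ r ∈ ellisSemigroup T, r x = z ∧ r y = w

lemma eventually_residual_isGenericEdge [CompactSpace X] [T2Space X] [SecondCountableTopology X]
    (T : X ≃ₜ X) : ∀ᶠ e in residual (X × X), IsGenericEdge T e.1 e.2 := by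
  filter_upwards [eventually_residual_mem_closure_range
    fun n ↦ (continuous_iterZ T n).prodMap (continuous_iterZ T n)] with ⟨x, y⟩ hxy z w h
  have hlimit : (z, w) ∈ closure (Set.range fun n ↦ (iterZ T n x, iterZ T n y)) := by
    refine hxy (z, w) (map_mem_closure
      (f := fun q : X × X × X × X ↦ ((q.1, q.2.1), (q.2.2.1, q.2.2.2))) (by fun_prop) h ?_)
    rintro _ ⟨x, m, n, rfl⟩
    exact ⟨n, by rw [Prod.map, ← iterZ_add, add_comm]⟩
  obtain ⟨r, hr, hrxy⟩ := exists_mem_ellisSemigroup_of_mem_closure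
    (f := fun g ↦ (g x, g y)) (by fun_prop) hlimit
  exact ⟨r, hr, Prod.ext_iff.1 hrxy⟩

end Parallelograms

section Minimal

variable {X : Type*} [MetricSpace X] {T : X ≃ₜ X}

lemma IsMinimal.iterZ_mem_para (hmin : IsMinimal T) (x y : X) (n : ℤ) :
    (x, y, iterZ T n x, iterZ T n y) ∈ Para T := by
  have := continuous_iterZ T n
  refine map_mem_closure (f := fun y ↦ (x, y, iterZ T n x, iterZ T n y)) (by fun_prop) (hmin x y) ?_
  rintro _ ⟨m, rfl⟩
  exact ⟨x, m, n, by rw [add_comm m, iterZ_add]⟩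

variable [CompactSpace X]

lemma RP.exists_mem_para (hmin : IsMinimal T) {x y : X} (h : RP T x y) :
    ∃ w, (x, y, w, w) ∈ Para T := by
  let defect (q : X × X × X × X) : ℝ :=
    max (max (dist q.1 x) (dist q.2.1 y)) (dist q.2.2.1 q.2.2.2)
  have hcompact : IsCompact (Para T) := isClosed_closure.isCompact
  obtain ⟨⟨x', y', w, w'⟩, hq, hqmin⟩ :=
    hcompact.exists_isMinOn (f := defect) ⟨_, hmin.iterZ_mem_para x y 0⟩ (by fun_prop)
  have hdefect : defect (x', y', w, w') ≤ 0 := by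
    refine le_of_forall_pos_lt_add fun ε hε ↦ ?_
    obtain ⟨x'', y'', n, hx, hy, hn⟩ := h ε hε
    calc defect (x', y', w, w') ≤ defect (x'', y'', iterZ T n x'', iterZ T n y'') :=
          hqmin (hmin.iterZ_mem_para x'' y'' n)
      _ < 0 + ε := by simpa only [zero_add] using max_lt (max_lt hx hy) hn
  simp only [defect, max_le_iff, dist_le_zero] at hdefect
  obtain ⟨⟨rfl, rfl⟩, rfl⟩ := hdefect
  exact ⟨w, hq⟩

lemma RP.mem_para (hmin : IsMinimal T) {x y : X} (h : RP T x y) (z : X) :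
    (x, z, y, z) ∈ Para T := by
  obtain ⟨w, hw⟩ := h.exists_mem_para hmin
  obtain ⟨p, hp, rfl⟩ := hmin.exists_mem_ellisSemigroup w z
  exact para_swap₂₃ (para_map₃₄ hp hw)

lemma IsMinimal.exists_isGenericEdge_map (hmin : IsMinimal T) (x y : X) :
    ∃ p ∈ ellisSemigroup T, ∃ q ∈ ellisSemigroup T, IsGenericEdge T (p x) (q (p y)) := by
  have : Nonempty X := ⟨x⟩
  obtain ⟨⟨x', y'⟩, hgeneric⟩ :=
    (dense_of_mem_residual (eventually_residual_isGenericEdge T)).nonempty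
  obtain ⟨p, hp, rfl⟩ := hmin.exists_mem_ellisSemigroup x x'
  obtain ⟨q, hq, rfl⟩ := hmin.exists_mem_ellisSemigroup (p y) y'
  exact ⟨p, hp, q, hq, hgeneric⟩

theorem para_replace_of_rp (hdistal : IsDistal T) (hmin : IsMinimal T) {x y z z' w : X}
    (h : (x, y, z, w) ∈ Para T) (hz : RP T z z') : (x, y, z', w) ∈ Para T := by
  obtain ⟨p, hp, q, hq, hgeneric⟩ := hmin.exists_isGenericEdge_map x y
  obtain ⟨r, hr, hrz, hrw⟩ := hgeneric _ _ (para_map₂₄ hq (para_map₁₂ hp h))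
  obtain ⟨p', hp', hpp⟩ := exists_leftInverse_mem_ellisSemigroup hdistal hp
  obtain ⟨q', hq', hqq⟩ := exists_leftInverse_mem_ellisSemigroup hdistal hq
  obtain ⟨r', hr', hrr⟩ := exists_leftInverse_mem_ellisSemigroup hdistal hr
  have hreplaced : (r (p x), r (q (p y)), z', q w) ∈ Para T := by
    rw [hrz, hrw]
    exact hz.mem_para hmin (q w)
  have hr_undone : (p x, q (p y), z', q w) ∈ Para T := by
    simpa only [hrr _] using para_map₁₂ hr' hreplaced
  have hq_undone : (p x, p y, z', w) ∈ Para T := by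
    simpa only [hqq _] using para_map₂₄ hq' hr_undone
  simpa only [hpp _] using para_map₁₂ hp' hq_undone

end Minimal

section GluedParallelograms

/-- The set `L`: pairs of parallelograms `(x₀, x₁, x₂, x₃)` and `(x₀, x₁, x₄, x₅)` obtained as a
common limit, hence glued along the edge `(x₀, x₁)`. The fixed vertex `x₀` is not recorded. -/
def gluedPara {X : Type*} [TopologicalSpace X] (T : X ≃ₜ X) (x₀ : X) : Set (X × X × X × X × X) :=
  closure {q | ∃ m n p : ℤ, q = (iterZ T m x₀, iterZ T n x₀, iterZ T (m + n) x₀,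
    iterZ T p x₀, iterZ T (p + m) x₀)}

section Topological

variable {X : Type*} [TopologicalSpace X] {T : X ≃ₜ X} {x₀ x₁ x₂ x₃ x₄ x₅ : X} {p : X → X}

lemma diag_mem_gluedPara (T : X ≃ₜ X) (x₀ : X) : (x₀, x₀, x₀, x₀, x₀) ∈ gluedPara T x₀ :=
  subset_closure ⟨0, 0, 0, by simp only [add_zero, iterZ_zero]⟩

lemma gluedPara_map₁₃₅ (hp : p ∈ ellisSemigroup T) (h : (x₁, x₂, x₃, x₄, x₅) ∈ gluedPara T x₀) :
    (p x₁, x₂, p x₃, x₄, p x₅) ∈ gluedPara T x₀ := by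
  refine mapsTo_closure_of_mem_ellisSemigroup (fun g (q : X × X × X × X × X) ↦
    (g q.1, q.2.1, g q.2.2.1, q.2.2.2.1, g q.2.2.2.2))
    (by fun_prop) (fun g hg ↦ by fun_prop) ?_ hp h
  rintro i _ ⟨m, n, k, rfl⟩
  refine ⟨i + m, n, k, ?_⟩
  simp only [← iterZ_add, add_assoc, add_left_comm]

lemma gluedPara_map₂₃ (hp : p ∈ ellisSemigroup T) (h : (x₁, x₂, x₃, x₄, x₅) ∈ gluedPara T x₀) :
    (x₁, p x₂, p x₃, x₄, x₅) ∈ gluedPara T x₀ := by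
  refine mapsTo_closure_of_mem_ellisSemigroup (fun g (q : X × X × X × X × X) ↦
    (q.1, g q.2.1, g q.2.2.1, q.2.2.2.1, q.2.2.2.2))
    (by fun_prop) (fun g hg ↦ by fun_prop) ?_ hp h
  rintro i _ ⟨m, n, k, rfl⟩
  refine ⟨m, i + n, k, ?_⟩
  simp only [← iterZ_add, add_left_comm]

lemma gluedPara_map₄₅ (hp : p ∈ ellisSemigroup T) (h : (x₁, x₂, x₃, x₄, x₅) ∈ gluedPara T x₀) :
    (x₁, x₂, x₃, p x₄, p x₅) ∈ gluedPara T x₀ := by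
  refine mapsTo_closure_of_mem_ellisSemigroup (fun g (q : X × X × X × X × X) ↦
    (q.1, q.2.1, q.2.2.1, g q.2.2.2.1, g q.2.2.2.2))
    (by fun_prop) (fun g hg ↦ by fun_prop) ?_ hp h
  rintro i _ ⟨m, n, k, rfl⟩
  refine ⟨m, n, i + k, ?_⟩
  simp only [← iterZ_add, add_assoc]

lemma para_left_of_mem_gluedPara (h : (x₁, x₂, x₃, x₄, x₅) ∈ gluedPara T x₀) :
    (x₀, x₁, x₂, x₃) ∈ Para T := by
  refine map_mem_closure (f := fun q : X × X × X × X × X ↦ (x₀, q.1, q.2.1, q.2.2.1))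
    (by fun_prop) h ?_
  rintro _ ⟨m, n, k, rfl⟩
  exact ⟨x₀, m, n, rfl⟩

lemma para_right_of_mem_gluedPara (h : (x₁, x₂, x₃, x₄, x₅) ∈ gluedPara T x₀) :
    (x₀, x₁, x₄, x₅) ∈ Para T := by
  refine map_mem_closure (f := fun q : X × X × X × X × X ↦ (x₀, q.1, q.2.2.2.1, q.2.2.2.2))
    (by fun_prop) h ?_
  rintro _ ⟨m, n, k, rfl⟩
  exact ⟨x₀, m, k, by rw [add_comm m k]⟩

end Topological

theorem mem_gluedPara_iff {X : Type*} [MetricSpace X] [CompactSpace X] {T : X ≃ₜ X}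
    (hdistal : IsDistal T) (hmin : IsMinimal T) {x₀ x₁ x₂ x₃ x₄ x₅ : X} :
    (x₁, x₂, x₃, x₄, x₅) ∈ gluedPara T x₀ ↔
      (x₀, x₁, x₂, x₃) ∈ Para T ∧ (x₀, x₁, x₄, x₅) ∈ Para T := by
  refine ⟨fun h ↦ ⟨para_left_of_mem_gluedPara h, para_right_of_mem_gluedPara h⟩, ?_⟩
  rintro ⟨hleft, hright⟩
  obtain ⟨p, hp, q, hq, hgeneric⟩ := hmin.exists_isGenericEdge_map x₀ x₁
  obtain ⟨r, hr, rfl, hrx⟩ := hgeneric _ _ (para_map₂₄ hq (para_map₁₂ hp hleft))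
  obtain ⟨s, hs, rfl, hsx⟩ := hgeneric _ _ (para_map₂₄ hq (para_map₁₂ hp hright))
  obtain ⟨e, he, rfl⟩ := hmin.exists_mem_ellisSemigroup x₀ x₁
  obtain ⟨q', hq', hqq⟩ := exists_leftInverse_mem_ellisSemigroup hdistal hq
  have hbase : (e x₀, p x₀, p (e x₀), p x₀, p (e x₀)) ∈ gluedPara T x₀ :=
    gluedPara_map₄₅ hp (gluedPara_map₂₃ hp (gluedPara_map₁₃₅ he (diag_mem_gluedPara T x₀)))
  have hshifted : (q (e x₀), r (p x₀), q x₃, s (p x₀), q x₅) ∈ gluedPara T x₀ := by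
    simpa only [hrx, hsx] using
      gluedPara_map₄₅ hs (gluedPara_map₂₃ hr (gluedPara_map₁₃₅ hq hbase))
  simpa only [hqq _] using gluedPara_map₁₃₅ hq' hshifted

end GluedParallelograms

/-- Stability of the set `L ⊆ X⁵` under replacing the 2nd and 4th coordinates by
regionally proximal points. -/
theorem stmt14 {X : Type*} [MetricSpace X] [CompactSpace X] [Nonempty X]
    (T : X ≃ₜ X) (hdistal : IsDistal T) (hmin : IsMinimal T) (x0 : X)
    (x1 x2 x3 x4 x5 x2' x4' : X)
    (hL : (x1, x2, x3, x4, x5) ∈ closure {q : X × X × X × X × X |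
      ∃ m n p : ℤ, q = (iterZ T m x0, iterZ T n x0, iterZ T (m + n) x0,
        iterZ T p x0, iterZ T (p + m) x0)})
    (h2 : RP T x2 x2') (h4 : RP T x4 x4') :
    (x1, x2', x3, x4', x5) ∈ closure {q : X × X × X × X × X |
      ∃ m n p : ℤ, q = (iterZ T m x0, iterZ T n x0, iterZ T (m + n) x0,
        iterZ T p x0, iterZ T (p + m) x0)} := by
  change _ ∈ gluedPara T x0
  obtain ⟨hleft, hright⟩ := (mem_gluedPara_iff hdistal hmin).1 hL
  exact (mem_gluedPara_iff hdistal hmin).2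
    ⟨para_replace_of_rp hdistal hmin hleft h2, para_replace_of_rp hdistal hmin hright h4⟩
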